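/- Let W be a finite-dimensional 𝔤-module over k with a decomposition W = ⊕_{γ∈Γ} W_γ into irreducible 𝔤-submodules and a decomposition W ⊗_k F = ⊕_{α∈A} V_α into irreducible (𝔤 ⊗_k F)-submodules. Fix γ₀ ∈ Γ and α₀ ∈ A with V_{α₀} ⊆ W_{γ₀} ⊗_k F, and let m be the number of indices γ ∈ Γ with W_γ ≅ W_{γ₀} (the multiplicity of W_{γ₀} in W). Then m · dim_k(W_{γ₀}) = Σ_{α ∈ A'} dim_F(V_α), where A' is the set of all α ∈ A for which there exist σ, τ ∈ S with τ(V_{α₀}) ≅ σ(V_α) as (𝔤 ⊗_k F)-modules. -/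

import Mathlib

open scoped TensorProduct

section

variable (k F : Type*) [Field k] [Field F] [Algebra k F]

private lemma galMap_aux (σ : F ≃ₐ[k] F) (W : Type*) [AddCommGroup W] [Module k W]
    (c : F) (x : F ⊗[k] W) :
    LinearMap.rTensor W σ.toLinearMap (c • x) = σ c • LinearMap.rTensor W σ.toLinearMap x := by
  induction x using TensorProduct.induction_on with
  | zero => simp
  | tmul f w => simp [TensorProduct.smul_tmul', smul_eq_mul, map_mul]
  | add x y hx hy => rw [smul_add, map_add, map_add, smul_add, hx, hy]

/-- The `σ`-semilinear Galois action `id_W ⊗ σ` on the base change `F ⊗[k] W`. -/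
noncomputable def galMap (σ : F ≃ₐ[k] F) (W : Type*) [AddCommGroup W] [Module k W] :
    (F ⊗[k] W) →ₛₗ[(σ.toRingEquiv : F →+* F)] (F ⊗[k] W) where
  toFun := LinearMap.rTensor W σ.toLinearMap
  map_add' := map_add _
  map_smul' := galMap_aux k F σ W

/-- The image `σ(V)` of an `F`-subspace of `F ⊗[k] W` under the Galois action:
again an `F`-subspace. -/
noncomputable def galSub (σ : F ≃ₐ[k] F) {W : Type*} [AddCommGroup W] [Module k W]
    (V : Submodule F (F ⊗[k] W)) : Submodule F (F ⊗[k] W) :=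
  Submodule.map (galMap k F σ W) V

variable (𝔤 : Type*) [LieRing 𝔤] [LieAlgebra k 𝔤]

/-- `σ(V_α)` and `τ(V_β)` are isomorphic as `(𝔤 ⊗_k F)`-modules; since the Galois
images are a priori only `F`-subspaces, we phrase this via the (unique) Lie submodules
having these subspaces as underlying `F`-subspaces. -/
def GalConjIso (σ τ : F ≃ₐ[k] F)
    {W₁ W₂ : Type*} [AddCommGroup W₁] [Module k W₁] [LieRingModule 𝔤 W₁] [LieModule k 𝔤 W₁]
    [AddCommGroup W₂] [Module k W₂] [LieRingModule 𝔤 W₂] [LieModule k 𝔤 W₂]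
    (Vα : LieSubmodule F (F ⊗[k] 𝔤) (F ⊗[k] W₁))
    (Vβ : LieSubmodule F (F ⊗[k] 𝔤) (F ⊗[k] W₂)) : Prop :=
  ∃ (Vα' : LieSubmodule F (F ⊗[k] 𝔤) (F ⊗[k] W₁))
    (Vβ' : LieSubmodule F (F ⊗[k] 𝔤) (F ⊗[k] W₂)),
    (Vα' : Submodule F (F ⊗[k] W₁)) = galSub k F σ (Vα : Submodule F (F ⊗[k] W₁)) ∧
    (Vβ' : Submodule F (F ⊗[k] W₂)) = galSub k F τ (Vβ : Submodule F (F ⊗[k] W₂)) ∧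
    Nonempty (Vα' ≃ₗ⁅F, F ⊗[k] 𝔤⁆ Vβ')

/-- A Lie module is semisimple if it is a direct sum of irreducible submodules. -/
def IsSemisimpleLieModule (R L M : Type*) [CommRing R] [LieRing L] [LieAlgebra R L]
    [AddCommGroup M] [Module R M] [LieRingModule L M] : Prop :=
  ∃ (ι : Type) (p : ι → LieSubmodule R L M),
    (∀ i, IsAtom (p i)) ∧ iSupIndep p ∧ (⨆ i, p i) = ⊤

end

/-!
The map `Tr ⊗ id : F ⊗ W → W` is `𝔤`-equivariant, compatible with base-changed morphisms, and does
not vanish on any nonzero `F`-subspace. Composing it with a morphism `F ⊗ N → F ⊗ N'` shows that for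
irreducible `N ≇ N'` the modules `F ⊗ N` and `F ⊗ N'` have no irreducible submodule in common. Since
`1 ⊗ Tr = ∑ σ`, the sum of the Galois conjugates of a nonzero submodule `V ⊆ F ⊗ N` contains some
`1 ⊗ w` with `0 ≠ w ∈ N`, hence is all of `F ⊗ N`: if `V` is irreducible, every irreducible
submodule of `F ⊗ N` is isomorphic to a conjugate of `V`. So the sum of the `V_α` conjugate to
`V_{α₀}` is the base change of the isotypic component of `W_{γ₀}`, and the theorem compares their
dimensions.
-/

section Lattice

variable {ι α : Type*} [CompleteLattice α]

lemma biSup_sup_iSup_compl (a : ι → α) (S : Set ι) :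
    (⨆ i ∈ S, a i) ⊔ ⨆ i : (Sᶜ : Set ι), a i = ⨆ i, a i := by
  rw [iSup_subtype'' Sᶜ a, ← iSup_union, Set.union_compl_self, iSup_univ]

lemma complementedLattice_of_iSup_eq_top_of_isAtom [IsModularLattice α]
    [IsCompactlyGenerated α] {a : ι → α} (ha : ∀ i, IsAtom (a i)) (h : ⨆ i, a i = ⊤) :
    ComplementedLattice α :=
  complementedLattice_of_sSup_atoms_eq_top
    (top_unique (h ▸ iSup_le fun i ↦ le_sSup (ha i)))

end Lattice

section LieModule

variable {R L M M' : Type*} [CommRing R] [LieRing L] [AddCommGroup M] [Module R M]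
  [LieRingModule L M] [AddCommGroup M'] [Module R M'] [LieRingModule L M']

/-- The projection of a Lie module onto the submodule `N` along a complement `C`, as a morphism of
Lie modules: the Lie-module version of `Submodule.projectionOnto`. -/
noncomputable def lieProjectionOnto {N C : LieSubmodule R L M} (h : IsCompl N C) :
    M →ₗ⁅R,L⁆ N where
  toLinearMap := (N : Submodule R M).projectionOnto C (LieSubmodule.isCompl_toSubmodule.mpr h)
  map_lie' := by
    intro x m
    have hNC := LieSubmodule.isCompl_toSubmodule.mpr h
    set p : M →ₗ[R] N := (N : Submodule R M).projectionOnto C hNC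
    have hp (n : N) (c : C) : p (n + c) = n := by
      rw [map_add, Submodule.projectionOnto_apply_left hNC n,
        Submodule.projectionOnto_apply_right hNC c, add_zero]
    obtain ⟨n, hn, c, hc, rfl⟩ :=
      Submodule.mem_sup.mp (hNC.sup_eq_top.ge (Submodule.mem_top (x := m)))
    change p ⁅x, n + c⁆ = ⁅x, p (n + c)⁆
    rw [hp ⟨n, hn⟩ ⟨c, hc⟩, lie_add]
    exact hp ⁅x, ⟨n, hn⟩⁆ ⁅x, ⟨c, hc⟩⁆

lemma lieProjectionOnto_coe {N C : LieSubmodule R L M} (h : IsCompl N C) (n : N) :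
    lieProjectionOnto h n = n :=
  Submodule.projectionOnto_apply_left (LieSubmodule.isCompl_toSubmodule.mpr h) n

lemma ker_lieProjectionOnto {N C : LieSubmodule R L M} (h : IsCompl N C) :
    (lieProjectionOnto h).ker = C :=
  LieSubmodule.toSubmodule_injective
    (Submodule.ker_projectionOnto (LieSubmodule.isCompl_toSubmodule.mpr h))

lemma nonempty_equiv_map_of_disjoint_ker (f : M →ₗ⁅R,L⁆ M') {N : LieSubmodule R L M}
    (h : Disjoint N f.ker) : Nonempty (N ≃ₗ⁅R,L⁆ N.map f) := by
  let g : N →ₗ⁅R,L⁆ N.map f :=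
    (f.comp N.incl).codRestrict (N.map f) fun n ↦ LieSubmodule.mem_map_of_mem n.2
  have hinj : Function.Injective g := by
    refine (LieModuleHom.ker_eq_bot g).mp ((LieSubmodule.eq_bot_iff _).mpr fun n hn ↦ ?_)
    exact Subtype.ext ((LieSubmodule.mem_bot _).mp (h.le_bot ⟨n.2, congrArg Subtype.val hn⟩))
  have hsurj : Function.Surjective g := by
    rintro ⟨_, n, hn, rfl⟩
    exact ⟨⟨n, hn⟩, rfl⟩
  exact ⟨{ LinearEquiv.ofBijective (g : N →ₗ[R] N.map f) ⟨hinj, hsurj⟩ with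
    map_lie' := g.map_lie _ _ }⟩

lemma isAtom_map_of_not_le_ker (f : M →ₗ⁅R,L⁆ M') {N : LieSubmodule R L M} (hN : IsAtom N)
    (h : ¬ N ≤ f.ker) : IsAtom (N.map f) := by
  refine ⟨fun hbot ↦ h ((f.le_ker_iff_map N).mpr hbot), fun K hK ↦ ?_⟩
  have hKmap : K ≤ (N ⊓ K.comap f).map f := fun y hy ↦ by
    obtain ⟨n, hn, rfl⟩ := hK.le hy
    exact ⟨n, ⟨hn, hy⟩, rfl⟩
  have hne : N ⊓ K.comap f ≠ N := fun heq ↦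
    hK.not_ge (LieSubmodule.map_le_iff_le_comap.mpr (inf_eq_left.mp heq))
  rw [hN.2 _ (lt_of_le_of_ne inf_le_left hne), LieSubmodule.map_bot] at hKmap
  exact le_bot_iff.mp hKmap

lemma nonempty_equiv_of_map_le (f : M →ₗ⁅R,L⁆ M') {N : LieSubmodule R L M}
    {N' : LieSubmodule R L M'} (hN : IsAtom N) (hN' : IsAtom N') (h : ¬ N ≤ f.ker)
    (hle : N.map f ≤ N') : Nonempty (N ≃ₗ⁅R,L⁆ N') := by
  have hmap : N.map f = N' := (hN'.le_iff.mp hle).resolve_left (isAtom_map_of_not_le_ker f hN h).1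
  exact hmap ▸ nonempty_equiv_map_of_disjoint_ker f (hN.not_le_iff_disjoint.mp h)

variable [ComplementedLattice (LieSubmodule R L M)]

lemma exists_disjoint_ker_forall_mem_of_equiv {N : LieSubmodule R L M} {N' : LieSubmodule R L M'}
    (e : N ≃ₗ⁅R,L⁆ N') : ∃ f : M →ₗ⁅R,L⁆ M', Disjoint N f.ker ∧ ∀ m, f m ∈ N' := by
  obtain ⟨C, hC⟩ := exists_isCompl N
  let f : M →ₗ⁅R,L⁆ M' := N'.incl.comp (e.toLieModuleHom.comp (lieProjectionOnto hC))
  refine ⟨f, disjoint_iff_inf_le.mpr fun n ⟨hn, hfn⟩ ↦ (LieSubmodule.mem_bot _).mpr ?_,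
    fun m ↦ (e (lieProjectionOnto hC m)).2⟩
  have hen : e ⟨n, hn⟩ = 0 := by
    rw [← lieProjectionOnto_coe hC ⟨n, hn⟩]
    exact Subtype.ext hfn
  exact congrArg Subtype.val (e.injective (hen.trans (map_zero e.toLieModuleHom).symm))

lemma exists_isAtom_le_nonempty_equiv {ι : Sort*} {V C : LieSubmodule R L M}
    {N : ι → LieSubmodule R L M} (hV : IsAtom V) (hVC : ¬ V ≤ C) (h : V ≤ C ⊔ ⨆ i, N i) :
    ∃ i, ∃ X ≤ N i, IsAtom X ∧ Nonempty (X ≃ₗ⁅R,L⁆ V) := by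
  obtain ⟨D, hCD, hDV⟩ := (hV.not_le_iff_disjoint.mp hVC).symm.exists_isCompl
  obtain ⟨i, hi⟩ : ∃ i, ¬ N i ≤ D := by
    by_contra! hN
    exact hV.1 (hDV.disjoint.eq_bot_of_ge (h.trans (sup_le hCD (iSup_le hN))))
  obtain ⟨X, hX, hXN, hXD⟩ : ∃ X, IsAtom X ∧ X ≤ N i ∧ ¬ X ≤ D := by
    by_contra! hX
    exact hi (le_iff_atom_le_imp.mpr hX)
  let f : M →ₗ⁅R,L⁆ M := V.incl.comp (lieProjectionOnto hDV.symm)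
  have hker : f.ker = D := by
    rw [← ker_lieProjectionOnto hDV.symm]
    ext x
    simp [f]
  refine ⟨i, X, hXN, hX, nonempty_equiv_of_map_le f hX hV (hker ▸ hXD) ?_⟩
  rintro _ ⟨x, -, rfl⟩
  exact (lieProjectionOnto hDV.symm x).2

end LieModule

section BaseChange

variable {k F 𝔤 W W' : Type*} [Field k] [Field F] [Algebra k F] [LieRing 𝔤] [LieAlgebra k 𝔤]
  [AddCommGroup W] [Module k W] [LieRingModule 𝔤 W] [LieModule k 𝔤 W]
  [AddCommGroup W'] [Module k W'] [LieRingModule 𝔤 W'] [LieModule k 𝔤 W']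

/-- The `𝔤`-submodule of vectors `w` of `W` with `1 ⊗ w` in a given submodule of `F ⊗[k] W`. It is
the right adjoint of base change on Lie submodules. -/
def lieDescend (Y : LieSubmodule F (F ⊗[k] 𝔤) (F ⊗[k] W)) : LieSubmodule k 𝔤 W where
  toSubmodule := (Y.toSubmodule.restrictScalars k).comap (TensorProduct.mk k F W 1)
  lie_mem := by
    intro x w hw
    simpa using Y.lie_mem (x := (1 : F) ⊗ₜ[k] x) hw

variable (F) in
lemma gc_baseChange_lieDescend : GaloisConnection
    (fun N : LieSubmodule k 𝔤 W ↦ N.baseChange F) lieDescend := by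
  refine fun N Y ↦ ⟨fun h w hw ↦ h (LieSubmodule.tmul_mem_baseChange_of_mem 1 hw), fun h ↦ ?_⟩
  rw [← LieSubmodule.toSubmodule_le_toSubmodule, LieSubmodule.coe_baseChange,
    Submodule.baseChange_eq_span, Submodule.span_le]
  rintro _ ⟨w, hw, rfl⟩
  exact h hw

lemma map_lie_of_map_lie_tmul (h : F ⊗[k] 𝔤 →+ F ⊗[k] 𝔤) (g : F ⊗[k] W →+ F ⊗[k] W')
    (hgh : ∀ (a b : F) (x : 𝔤) (w : W), g ((a * b) ⊗ₜ ⁅x, w⁆) = ⁅h (a ⊗ₜ x), g (b ⊗ₜ w)⁆)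
    (z : F ⊗[k] 𝔤) (v : F ⊗[k] W) : g ⁅z, v⁆ = ⁅h z, g v⁆ := by
  induction z with
  | zero =>
    rw [map_zero]
    exact (congrArg g (zero_lie v)).trans ((map_zero g).trans (zero_lie (g v)).symm)
  | add z z' hz hz' =>
    rw [map_add]
    refine (congrArg g (add_lie z z' v)).trans (.trans ?_ (add_lie (h z) (h z') (g v)).symm)
    rw [map_add, hz, hz']
  | tmul a x =>
    induction v with
    | zero => simp
    | add u v hu hv => rw [lie_add, map_add, map_add, lie_add, hu, hv]
    | tmul b w => exact hgh a b x w

variable (F) in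
/-- The base change of a morphism of Lie modules, as a morphism over the base-changed Lie
algebra. -/
noncomputable def lieBaseChangeHom (f : W →ₗ⁅k,𝔤⁆ W') :
    (F ⊗[k] W) →ₗ⁅F,F ⊗[k] 𝔤⁆ (F ⊗[k] W') where
  toLinearMap := (f : W →ₗ[k] W').baseChange F
  map_lie' := by
    intro z v
    exact map_lie_of_map_lie_tmul (.id _) ((f : W →ₗ[k] W').baseChange F).toAddMonoidHom (by simp)
      z v

lemma lieBaseChangeHom_tmul (f : W →ₗ⁅k,𝔤⁆ W') (a : F) (w : W) :
    lieBaseChangeHom F f (a ⊗ₜ w) = a ⊗ₜ f w :=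
  rfl

lemma map_baseChange_le (f : W →ₗ⁅k,𝔤⁆ W') (N : LieSubmodule k 𝔤 W) :
    (N.baseChange F).map (lieBaseChangeHom F f) ≤ (N.map f).baseChange F := by
  rw [LieSubmodule.map_le_iff_le_comap, gc_baseChange_lieDescend]
  exact fun w hw ↦ LieSubmodule.tmul_mem_baseChange_of_mem 1 (LieSubmodule.mem_map_of_mem hw)

variable (k F W) in
/-- The trace map `Tr ⊗ id_W : F ⊗[k] W → W`, which brings submodules and morphisms over `F` down to
`k`. -/
noncomputable def tensorTrace : F ⊗[k] W →ₗ[k] W :=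
  TensorProduct.lift ((LinearMap.lsmul k W : k →ₗ[k] W →ₗ[k] W) ∘ₗ Algebra.trace k F)

@[simp]
lemma tensorTrace_tmul (a : F) (w : W) : tensorTrace k F W (a ⊗ₜ w) = Algebra.trace k F a • w :=
  rfl

lemma tensorTrace_lie (x : 𝔤) (v : F ⊗[k] W) :
    tensorTrace k F W ⁅(1 : F) ⊗ₜ[k] x, v⁆ = ⁅x, tensorTrace k F W v⁆ := by
  induction v with
  | zero => simp
  | tmul a w => simp
  | add u v hu hv => simp [hu, hv]

lemma tensorTrace_lieBaseChangeHom (f : W →ₗ⁅k,𝔤⁆ W') (v : F ⊗[k] W) :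
    tensorTrace k F W' (lieBaseChangeHom F f v) = f (tensorTrace k F W v) := by
  induction v with
  | zero => simp
  | tmul a w => simp [lieBaseChangeHom_tmul]
  | add u v hu hv => simp [hu, hv]

lemma tensorTrace_mem_of_mem_baseChange {N : LieSubmodule k 𝔤 W} {v : F ⊗[k] W}
    (hv : v ∈ N.baseChange F) : tensorTrace k F W v ∈ N := by
  obtain ⟨u, rfl⟩ := hv
  exact tensorTrace_lieBaseChangeHom N.incl u ▸ (tensorTrace k F N u).2

variable [FiniteDimensional k F] [Algebra.IsSeparable k F]

lemma sum_tmul_tensorTrace_traceDual {ι : Type*} [Fintype ι] [DecidableEq ι]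
    (b : Module.Basis ι k F) (v : F ⊗[k] W) :
    ∑ i, b i ⊗ₜ[k] tensorTrace k F W (b.traceDual i • v) = v := by
  induction v with
  | zero => simp
  | add u v hu hv =>
    simp only [smul_add, map_add, TensorProduct.tmul_add, Finset.sum_add_distrib, hu, hv]
  | tmul a w =>
    have hb : ∑ i, Algebra.trace k F (b.traceDual i * a) • b i = a := by
      conv_rhs => rw [← b.sum_repr a]
      refine Finset.sum_congr rfl fun i _ ↦ congrArg (· • b i) ?_
      rw [mul_comm, ← Algebra.traceForm_apply, ← b.traceDual.traceDual_repr_apply,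
        b.traceDual_traceDual]
    simp only [TensorProduct.smul_tmul', tensorTrace_tmul, smul_eq_mul, ← TensorProduct.smul_tmul,
      ← TensorProduct.sum_tmul, hb]

lemma exists_tensorTrace_smul_ne_zero {v : F ⊗[k] W} (hv : v ≠ 0) :
    ∃ c : F, tensorTrace k F W (c • v) ≠ 0 := by
  classical
  by_contra! h
  refine hv ?_
  rw [← sum_tmul_tensorTrace_traceDual (Module.finBasis k F) v]
  simp [h]

lemma disjoint_baseChange {N P : LieSubmodule k 𝔤 W} (h : Disjoint N P) :
    Disjoint (N.baseChange F) (P.baseChange F) := by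
  refine disjoint_iff_inf_le.mpr fun v hv ↦ (LieSubmodule.mem_bot _).mpr ?_
  by_contra hne
  obtain ⟨c, hc⟩ := exists_tensorTrace_smul_ne_zero hne
  exact hc ((LieSubmodule.mem_bot _).mp (h.le_bot
    ⟨tensorTrace_mem_of_mem_baseChange ((N.baseChange F).smul_mem c hv.1),
      tensorTrace_mem_of_mem_baseChange ((P.baseChange F).smul_mem c hv.2)⟩))

lemma disjoint_baseChange_ker {N : LieSubmodule k 𝔤 W} {f : W →ₗ⁅k,𝔤⁆ W'} (h : Disjoint N f.ker) :
    Disjoint (N.baseChange F) (lieBaseChangeHom F f).ker := by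
  refine disjoint_iff_inf_le.mpr fun v hv ↦ (LieSubmodule.mem_bot _).mpr ?_
  by_contra hne
  obtain ⟨c, hc⟩ := exists_tensorTrace_smul_ne_zero hne
  have hker : f (tensorTrace k F W (c • v)) = 0 := by
    rw [← tensorTrace_lieBaseChangeHom, map_smul, LieModuleHom.mem_ker.mp hv.2, smul_zero,
      map_zero]
  exact hc ((LieSubmodule.mem_bot _).mp (h.le_bot
    ⟨tensorTrace_mem_of_mem_baseChange ((N.baseChange F).smul_mem c hv.1), hker⟩))

/-- The morphism `w ↦ (Tr ⊗ id) (c • g (1 ⊗ w))` of `𝔤`-modules over `k` obtained from a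
morphism `g` of base changes. The scalar `c` is there to make it nonzero when `g` is. -/
noncomputable def lieTraceHom (g : (F ⊗[k] W) →ₗ⁅F,F ⊗[k] 𝔤⁆ (F ⊗[k] W')) (c : F) :
    W →ₗ⁅k,𝔤⁆ W' where
  toLinearMap := tensorTrace k F W' ∘ₗ
    (c • (g : F ⊗[k] W →ₗ[F] F ⊗[k] W')).restrictScalars k ∘ₗ TensorProduct.mk k F W 1
  map_lie' := by
    intro x w
    change tensorTrace k F W' (c • g (1 ⊗ₜ ⁅x, w⁆)) = ⁅x, tensorTrace k F W' (c • g (1 ⊗ₜ w))⁆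
    have hxw : (1 : F) ⊗ₜ[k] ⁅x, w⁆ = ⁅(1 : F) ⊗ₜ[k] x, (1 : F) ⊗ₜ[k] w⁆ := by simp
    rw [← tensorTrace_lie, hxw, LieModuleHom.map_lie]
    exact congrArg _ (lie_smul c _ _).symm

lemma nonempty_equiv_of_baseChange_map_le (g : (F ⊗[k] W) →ₗ⁅F,F ⊗[k] 𝔤⁆ (F ⊗[k] W'))
    {N : LieSubmodule k 𝔤 W} {N' : LieSubmodule k 𝔤 W'} (hN : IsAtom N) (hN' : IsAtom N')
    (hg : ¬ N.baseChange F ≤ g.ker) (hle : (N.baseChange F).map g ≤ N'.baseChange F) :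
    Nonempty (N ≃ₗ⁅k,𝔤⁆ N') := by
  obtain ⟨w, hw, hgw⟩ : ∃ w ∈ N, g (1 ⊗ₜ w) ≠ 0 := by
    by_contra! h
    exact hg ((gc_baseChange_lieDescend F).l_le h)
  obtain ⟨c, hc⟩ := exists_tensorTrace_smul_ne_zero hgw
  refine nonempty_equiv_of_map_le (lieTraceHom g c) hN hN' (fun h ↦ hc (h hw)) ?_
  rintro _ ⟨u, hu, rfl⟩
  exact tensorTrace_mem_of_mem_baseChange ((N'.baseChange F).smul_mem c
    (hle (LieSubmodule.mem_map_of_mem (LieSubmodule.tmul_mem_baseChange_of_mem 1 hu))))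

lemma nonempty_equiv_of_le_baseChange [ComplementedLattice (LieSubmodule F (F ⊗[k] 𝔤) (F ⊗[k] W))]
    {N : LieSubmodule k 𝔤 W} {N' : LieSubmodule k 𝔤 W'} (hN : IsAtom N) (hN' : IsAtom N')
    {X : LieSubmodule F (F ⊗[k] 𝔤) (F ⊗[k] W)} {X' : LieSubmodule F (F ⊗[k] 𝔤) (F ⊗[k] W')}
    (hX : X ≠ ⊥) (hXN : X ≤ N.baseChange F) (hXN' : X' ≤ N'.baseChange F)
    (e : X ≃ₗ⁅F,F ⊗[k] 𝔤⁆ X') : Nonempty (N ≃ₗ⁅k,𝔤⁆ N') := by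
  obtain ⟨g, hgX, hgX'⟩ := exists_disjoint_ker_forall_mem_of_equiv e
  refine nonempty_equiv_of_baseChange_map_le g hN hN' (fun h ↦ hX ?_) ?_
  · exact hgX.eq_bot_of_le (hXN.trans h)
  · rintro _ ⟨v, -, rfl⟩
    exact hXN' (hgX' v)

end BaseChange

section Galois

variable {k F 𝔤 W : Type*} [Field k] [Field F] [Algebra k F] [LieRing 𝔤] [LieAlgebra k 𝔤]
  [AddCommGroup W] [Module k W] [LieRingModule 𝔤 W] [LieModule k 𝔤 W]

lemma galMap_tmul (σ : F ≃ₐ[k] F) (a : F) (w : W) : galMap k F σ W (a ⊗ₜ w) = σ a ⊗ₜ w :=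
  rfl

lemma galMap_symm_galMap (σ : F ≃ₐ[k] F) (v : F ⊗[k] W) :
    galMap k F σ.symm W (galMap k F σ W v) = v := by
  induction v with
  | zero => rw [map_zero, map_zero]
  | tmul a w => exact congrArg (· ⊗ₜ w) (σ.symm_apply_apply a)
  | add u v hu hv => rw [map_add, map_add, hu, hv]

lemma galMap_lie (σ : F ≃ₐ[k] F) (z : F ⊗[k] 𝔤) (v : F ⊗[k] W) :
    galMap k F σ W ⁅z, v⁆ = ⁅galMap k F σ 𝔤 z, galMap k F σ W v⁆ :=
  map_lie_of_map_lie_tmul (galMap k F σ 𝔤).toAddMonoidHom (galMap k F σ W).toAddMonoidHom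
    (fun a b x w ↦ congrArg (· ⊗ₜ ⁅x, w⁆) (map_mul σ a b)) z v

/-- The Galois conjugate `σ(V)` of a Lie submodule `V` of `F ⊗[k] W`: the subspace `galSub k F σ V`
as a Lie submodule. -/
noncomputable def galLieSub (σ : F ≃ₐ[k] F) (V : LieSubmodule F (F ⊗[k] 𝔤) (F ⊗[k] W)) :
    LieSubmodule F (F ⊗[k] 𝔤) (F ⊗[k] W) where
  toSubmodule := galSub k F σ V
  lie_mem := by
    rintro z _ ⟨v, hv, rfl⟩
    refine ⟨⁅galMap k F σ.symm 𝔤 z, v⁆, V.lie_mem hv, ?_⟩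
    rw [galMap_lie]
    exact congrArg (⁅·, galMap k F σ W v⁆) (galMap_symm_galMap σ.symm z)

lemma galLieSub_le_iff (σ : F ≃ₐ[k] F) {V V' : LieSubmodule F (F ⊗[k] 𝔤) (F ⊗[k] W)} :
    galLieSub σ V ≤ V' ↔ V ≤ galLieSub σ.symm V' := by
  constructor
  · exact fun h v hv ↦ ⟨galMap k F σ W v, h ⟨v, hv, rfl⟩, galMap_symm_galMap σ v⟩
  · rintro h _ ⟨v, hv, rfl⟩
    obtain ⟨v', hv', rfl⟩ := h hv
    exact (galMap_symm_galMap σ.symm v').symm ▸ hv'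

lemma galLieSub_symm_galLieSub (σ : F ≃ₐ[k] F) (V : LieSubmodule F (F ⊗[k] 𝔤) (F ⊗[k] W)) :
    galLieSub σ.symm (galLieSub σ V) = V :=
  le_antisymm ((galLieSub_le_iff σ.symm).mpr le_rfl) ((galLieSub_le_iff σ).mp le_rfl)

lemma galLieSub_one (V : LieSubmodule F (F ⊗[k] 𝔤) (F ⊗[k] W)) :
    galLieSub (1 : F ≃ₐ[k] F) V = V := by
  have hid (v : F ⊗[k] W) : galMap k F 1 W v = v := LinearMap.rTensor_id_apply W F v
  ext v
  constructor
  · rintro ⟨v, hv, rfl⟩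
    exact (hid v).symm ▸ hv
  · exact fun hv ↦ ⟨v, hv, hid v⟩

lemma isAtom_galLieSub (σ : F ≃ₐ[k] F) {V : LieSubmodule F (F ⊗[k] 𝔤) (F ⊗[k] W)}
    (hV : IsAtom V) : IsAtom (galLieSub σ V) := by
  let e : LieSubmodule F (F ⊗[k] 𝔤) (F ⊗[k] W) ≃o LieSubmodule F (F ⊗[k] 𝔤) (F ⊗[k] W) :=
    { toFun := galLieSub σ
      invFun := galLieSub σ.symm
      left_inv := galLieSub_symm_galLieSub σ
      right_inv := galLieSub_symm_galLieSub σ.symm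
      map_rel_iff' := by
        intro V V'
        change galLieSub σ V ≤ galLieSub σ V' ↔ V ≤ V'
        rw [galLieSub_le_iff, galLieSub_symm_galLieSub] }
  exact (e.isAtom_iff V).mpr hV

lemma galLieSub_le_baseChange_iff (σ : F ≃ₐ[k] F) {V : LieSubmodule F (F ⊗[k] 𝔤) (F ⊗[k] W)}
    {N : LieSubmodule k 𝔤 W} : galLieSub σ V ≤ N.baseChange F ↔ V ≤ N.baseChange F := by
  have hle (σ : F ≃ₐ[k] F) : N.baseChange F ≤ galLieSub σ (N.baseChange F) :=
    (gc_baseChange_lieDescend F).l_le fun w hw ↦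
      ⟨1 ⊗ₜ w, LieSubmodule.tmul_mem_baseChange_of_mem 1 hw, congrArg (· ⊗ₜ w) (map_one σ)⟩
  rw [galLieSub_le_iff, le_antisymm ((galLieSub_le_iff _).mpr (hle _)) (hle _)]

lemma galConjIso_iff (σ τ : F ≃ₐ[k] F) (V V' : LieSubmodule F (F ⊗[k] 𝔤) (F ⊗[k] W)) :
    GalConjIso k F 𝔤 σ τ V V' ↔
      Nonempty (galLieSub σ V ≃ₗ⁅F,F ⊗[k] 𝔤⁆ galLieSub τ V') := by
  constructor
  · rintro ⟨X, X', hX, hX', e⟩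
    obtain rfl : X = galLieSub σ V := LieSubmodule.toSubmodule_injective hX
    obtain rfl : X' = galLieSub τ V' := LieSubmodule.toSubmodule_injective hX'
    exact e
  · exact fun e ↦ ⟨_, _, rfl, rfl, e⟩

variable [FiniteDimensional k F] [IsGalois k F]

lemma sum_galMap (v : F ⊗[k] W) :
    ∑ σ : F ≃ₐ[k] F, galMap k F σ W v = 1 ⊗ₜ tensorTrace k F W v := by
  induction v with
  | zero => simp_rw [map_zero, TensorProduct.tmul_zero, Finset.sum_const_zero]
  | tmul a w =>
    simp_rw [galMap_tmul]
    rw [← TensorProduct.sum_tmul, ← trace_eq_sum_automorphisms, tensorTrace_tmul,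
      Algebra.algebraMap_eq_smul_one, TensorProduct.smul_tmul]
  | add u v hu hv => simp_rw [map_add]; rw [Finset.sum_add_distrib, hu, hv, TensorProduct.tmul_add]

lemma baseChange_le_iSup_galLieSub {N : LieSubmodule k 𝔤 W} (hN : IsAtom N)
    {V : LieSubmodule F (F ⊗[k] 𝔤) (F ⊗[k] W)} (hV : V ≠ ⊥) (hVN : V ≤ N.baseChange F) :
    N.baseChange F ≤ ⨆ σ : F ≃ₐ[k] F, galLieSub σ V := by
  obtain ⟨v, hv, hne⟩ := V.toSubmodule.exists_mem_ne_zero_of_ne_bot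
    (mt V.toSubmodule_eq_bot.mp hV)
  obtain ⟨c, hc⟩ := exists_tensorTrace_smul_ne_zero hne
  have hcv := V.smul_mem c hv
  have hsum : (1 : F) ⊗ₜ tensorTrace k F W (c • v) ∈ ⨆ σ : F ≃ₐ[k] F, galLieSub σ V := by
    rw [← sum_galMap]
    exact sum_mem fun σ _ ↦ le_iSup (galLieSub · V) σ ⟨c • v, hcv, rfl⟩
  refine (gc_baseChange_lieDescend F).l_le (hN.not_disjoint_iff_le.mp fun hdisj ↦ hc ?_)
  exact (LieSubmodule.mem_bot _).mp
    (hdisj.le_bot ⟨tensorTrace_mem_of_mem_baseChange (hVN hcv), hsum⟩)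

variable [ComplementedLattice (LieSubmodule F (F ⊗[k] 𝔤) (F ⊗[k] W))]

lemma exists_galLieSub_equiv {N : LieSubmodule k 𝔤 W} (hN : IsAtom N)
    {V V' : LieSubmodule F (F ⊗[k] 𝔤) (F ⊗[k] W)} (hV : IsAtom V) (hV' : IsAtom V')
    (hVN : V ≤ N.baseChange F) (hVN' : V' ≤ N.baseChange F) :
    ∃ σ : F ≃ₐ[k] F, Nonempty (galLieSub σ V ≃ₗ⁅F,F ⊗[k] 𝔤⁆ V') := by
  obtain ⟨σ, X, hXV, hX, e⟩ := exists_isAtom_le_nonempty_equiv (C := ⊥) hV'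
    (fun h ↦ hV'.1 (le_bot_iff.mp h))
    (le_sup_of_le_right (hVN'.trans (baseChange_le_iSup_galLieSub hN hV.1 hVN)))
  obtain rfl := ((isAtom_galLieSub σ hV).le_iff.mp hXV).resolve_left hX.1
  exact ⟨σ, e⟩

end Galois

section Isotypic

variable {k F 𝔤 W : Type*} [Field k] [Field F] [Algebra k F] [LieRing 𝔤] [LieAlgebra k 𝔤]
  [AddCommGroup W] [Module k W] [LieRingModule 𝔤 W] [LieModule k 𝔤 W]

lemma baseChange_biSup_sup_iSup_compl {Γ : Type*} {N : Γ → LieSubmodule k 𝔤 W}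
    (hN : ⨆ γ, N γ = ⊤) (T : Set Γ) :
    (⨆ γ ∈ T, N γ).baseChange F ⊔ ⨆ γ : (Tᶜ : Set Γ), (N γ).baseChange F = ⊤ := by
  have gc := gc_baseChange_lieDescend (k := k) (𝔤 := 𝔤) (W := W) F
  rw [← gc.l_iSup, ← gc.l_sup, biSup_sup_iSup_compl, hN, LieSubmodule.baseChange_top]

lemma exists_isAtom_le_baseChange_of_equiv [FiniteDimensional k F] [Algebra.IsSeparable k F]
    [ComplementedLattice (LieSubmodule k 𝔤 W)]
    {N N' : LieSubmodule k 𝔤 W} (e : N ≃ₗ⁅k,𝔤⁆ N')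
    {X : LieSubmodule F (F ⊗[k] 𝔤) (F ⊗[k] W)} (hX : IsAtom X) (hXN : X ≤ N.baseChange F) :
    ∃ X' ≤ N'.baseChange F, IsAtom X' ∧ Nonempty (X ≃ₗ⁅F,F ⊗[k] 𝔤⁆ X') := by
  obtain ⟨f, hker, hfN'⟩ := exists_disjoint_ker_forall_mem_of_equiv e
  have hmap : N.map f ≤ N' := by
    rintro _ ⟨w, -, rfl⟩
    exact hfN' w
  have hXker : Disjoint X (lieBaseChangeHom F f).ker :=
    (disjoint_baseChange_ker hker).mono_left hXN
  exact ⟨X.map (lieBaseChangeHom F f),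
    (LieSubmodule.map_mono hXN).trans ((map_baseChange_le f N).trans
      ((gc_baseChange_lieDescend F).monotone_l hmap)),
    isAtom_map_of_not_le_ker _ hX (hX.not_le_iff_disjoint.mpr hXker),
    nonempty_equiv_map_of_disjoint_ker _ hXker⟩

variable [FiniteDimensional k F] [IsGalois k F]
  [ComplementedLattice (LieSubmodule F (F ⊗[k] 𝔤) (F ⊗[k] W))]
  {Γ : Type*} {N : Γ → LieSubmodule k 𝔤 W} {V₀ V : LieSubmodule F (F ⊗[k] 𝔤) (F ⊗[k] W)}

lemma le_baseChange_iSup_of_galConjIso (hN : ∀ γ, IsAtom (N γ)) (hsup : ⨆ γ, N γ = ⊤)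
    {γ₀ : Γ} (hV : IsAtom V) (hV₀ : V₀ ≤ (N γ₀).baseChange F) {σ τ : F ≃ₐ[k] F}
    (h : GalConjIso k F 𝔤 τ σ V₀ V) :
    V ≤ (⨆ γ ∈ {γ | Nonempty (N γ ≃ₗ⁅k,𝔤⁆ N γ₀)}, N γ).baseChange F := by
  obtain ⟨e⟩ := (galConjIso_iff τ σ V₀ V).mp h
  rw [← galLieSub_le_baseChange_iff σ]
  by_contra hle
  obtain ⟨γ, X, hXγ, hX, ⟨e'⟩⟩ := exists_isAtom_le_nonempty_equiv (isAtom_galLieSub σ hV) hle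
    (le_top.trans_eq (baseChange_biSup_sup_iSup_compl hsup _).symm)
  exact γ.2 (nonempty_equiv_of_le_baseChange (hN γ) (hN γ₀) hX.1 hXγ
    ((galLieSub_le_baseChange_iff τ).mpr hV₀) (e'.trans e.symm))

lemma exists_galConjIso_of_not_le_baseChange_iSup [ComplementedLattice (LieSubmodule k 𝔤 W)]
    (hsup : ⨆ γ, N γ = ⊤) {γ₀ : Γ} (hN : IsAtom (N γ₀))
    (hV : IsAtom V) (hV₀ : IsAtom V₀) (hV₀N : V₀ ≤ (N γ₀).baseChange F)
    (h : ¬ V ≤ (⨆ γ ∈ {γ | Nonempty (N γ ≃ₗ⁅k,𝔤⁆ N γ₀)}ᶜ, N γ).baseChange F) :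
    ∃ τ : F ≃ₐ[k] F, GalConjIso k F 𝔤 τ 1 V₀ V := by
  obtain ⟨⟨γ, hγ⟩, X, hXγ, hX, ⟨e⟩⟩ := exists_isAtom_le_nonempty_equiv hV h
    (le_top.trans_eq (baseChange_biSup_sup_iSup_compl hsup _).symm)
  obtain ⟨eγ⟩ := not_not.mp hγ
  obtain ⟨X', hX'N, hX', ⟨e'⟩⟩ := exists_isAtom_le_baseChange_of_equiv eγ hX hXγ
  obtain ⟨τ, ⟨eτ⟩⟩ := exists_galLieSub_equiv hN hV₀ hX' hV₀N hX'N
  refine ⟨τ, (galConjIso_iff τ 1 V₀ V).mpr ?_⟩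
  rw [galLieSub_one]
  exact ⟨eτ.trans (e'.symm.trans e)⟩

end Isotypic

section Decomposition

variable {k F 𝔤 W Γ A : Type*} [Field k] [Field F] [Algebra k F] [FiniteDimensional k F]
  [IsGalois k F] [LieRing 𝔤] [LieAlgebra k 𝔤]
  [AddCommGroup W] [Module k W] [LieRingModule 𝔤 W] [LieModule k 𝔤 W]
  {N : Γ → LieSubmodule k 𝔤 W} {V : A → LieSubmodule F (F ⊗[k] 𝔤) (F ⊗[k] W)}

theorem iSup_galConjIso_eq_baseChange_iSup_equiv
    (hN : ∀ γ, IsAtom (N γ)) (hNindep : iSupIndep N) (hNsup : ⨆ γ, N γ = ⊤)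
    (hV : ∀ α, IsAtom (V α)) (hVsup : ⨆ α, V α = ⊤)
    {γ₀ : Γ} {α₀ : A} (h₀ : V α₀ ≤ (N γ₀).baseChange F) :
    ⨆ α ∈ {α | ∃ σ τ : F ≃ₐ[k] F, GalConjIso k F 𝔤 τ σ (V α₀) (V α)}, V α =
      (⨆ γ ∈ {γ | Nonempty (N γ ≃ₗ⁅k,𝔤⁆ N γ₀)}, N γ).baseChange F := by
  have := complementedLattice_of_iSup_eq_top_of_isAtom hN hNsup
  have := complementedLattice_of_iSup_eq_top_of_isAtom hV hVsup
  set T := {γ | Nonempty (N γ ≃ₗ⁅k,𝔤⁆ N γ₀)}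
  set S := {α | ∃ σ τ : F ≃ₐ[k] F, GalConjIso k F 𝔤 τ σ (V α₀) (V α)}
  have hS : ⨆ α ∈ S, V α ≤ (⨆ γ ∈ T, N γ).baseChange F :=
    iSup₂_le fun α ⟨σ, τ, h⟩ ↦ le_baseChange_iSup_of_galConjIso hN hNsup (hV α) h₀ h
  have hSc : ⨆ α : (Sᶜ : Set A), V α ≤ (⨆ γ ∈ Tᶜ, N γ).baseChange F :=
    iSup_le fun α ↦ by_contra fun h ↦ α.2 ⟨1,
      exists_galConjIso_of_not_le_baseChange_iSup hNsup (hN γ₀) (hV α) (hV α₀) h₀ h⟩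
  have hdisj : Disjoint ((⨆ γ ∈ T, N γ).baseChange F) ((⨆ γ ∈ Tᶜ, N γ).baseChange F) :=
    disjoint_baseChange (hNindep.disjoint_biSup_biSup disjoint_compl_right)
  refine eq_of_le_of_inf_le_of_le_sup (z := ⨆ α : (Sᶜ : Set A), V α) hS ?_ ?_
  · exact (hdisj.mono_right hSc).le_bot.trans bot_le
  · rw [biSup_sup_iSup_compl, hVsup]
    exact le_top

end Decomposition

section Dimension

lemma finrank_iSup_eq_finsum {K M ι : Type*} [DivisionRing K] [AddCommGroup M] [Module K M]
    [Finite ι] {p : ι → Submodule K M} [∀ i, FiniteDimensional K (p i)] (hp : iSupIndep p) :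
    Module.finrank K ↥(⨆ i, p i) = ∑ᶠ i, Module.finrank K (p i) := by
  classical
  have := Fintype.ofFinite ι
  rw [Submodule.iSup_eq_range_dfinsupp_lsum, finsum_eq_sum_of_fintype,
    ← (LinearEquiv.ofInjective _ hp.dfinsupp_lsum_injective).finrank_eq]
  exact Module.finrank_directSum K fun i ↦ p i

section LieSubmodule

variable {K L M ι : Type*} [Field K] [LieRing L] [AddCommGroup M] [Module K M] [LieRingModule L M]
  {p : ι → LieSubmodule K L M} (S : Set ι) [FiniteDimensional K ↥(⨆ i ∈ S, p i)]

lemma finite_of_finiteDimensional_biSup (hp : iSupIndep p) (hne : ∀ i, p i ≠ ⊥) : Finite S := by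
  choose v hv hv0 using fun i ↦
    (p i).toSubmodule.exists_mem_ne_zero_of_ne_bot (mt (p i).toSubmodule_eq_bot.mp (hne i))
  have hlin : LinearIndependent K v :=
    (LieSubmodule.iSupIndep_toSubmodule.mpr hp).linearIndependent _ hv hv0
  have hmem (i : S) : v i ∈ ⨆ i ∈ S, p i := le_biSup p i.2 (hv i)
  have hlinS : LinearIndependent K fun i : S ↦ (⟨v i, hmem i⟩ : ↥(⨆ i ∈ S, p i)) :=
    .of_comp (⨆ i ∈ S, p i).toSubmodule.subtype (hlin.comp _ Subtype.val_injective)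
  exact hlinS.finite

lemma finrank_biSup_eq_finsum [Finite S] (hp : iSupIndep p) :
    Module.finrank K ↥(⨆ i ∈ S, p i) = ∑ᶠ i ∈ S, Module.finrank K (p i) := by
  have hind : iSupIndep fun i : S ↦ (p i).toSubmodule :=
    (LieSubmodule.iSupIndep_toSubmodule.mpr hp).comp Subtype.val_injective
  have hfin (i : S) : FiniteDimensional K (p i).toSubmodule :=
    .of_injective _ (Submodule.inclusion_injective (le_biSup p i.2))
  rw [← finsum_set_coe_eq_finsum_mem, ← iSup_subtype'']
  exact (LinearEquiv.ofEq _ _ (LieSubmodule.iSup_toSubmodule _)).finrank_eq.trans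
    (finrank_iSup_eq_finsum hind)

lemma finrank_biSup_eq_card_mul [Finite S] (hp : iSupIndep p) {n : ℕ}
    (hn : ∀ i ∈ S, Module.finrank K (p i) = n) :
    Module.finrank K ↥(⨆ i ∈ S, p i) = Nat.card S * n := by
  have := Fintype.ofFinite S
  rw [finrank_biSup_eq_finsum S hp, finsum_mem_congr rfl hn, ← finsum_set_coe_eq_finsum_mem,
    finsum_eq_sum_of_fintype, Finset.sum_const, Finset.card_univ, Nat.card_eq_fintype_card,
    smul_eq_mul]

end LieSubmodule

lemma finrank_lieBaseChange {k F 𝔤 W : Type*} [Field k] [Field F] [Algebra k F] [LieRing 𝔤]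
    [LieAlgebra k 𝔤] [AddCommGroup W] [Module k W] [LieRingModule 𝔤 W] [LieModule k 𝔤 W]
    (N : LieSubmodule k 𝔤 W) : Module.finrank F (N.baseChange F) = Module.finrank k N :=
  (Submodule.toBaseChange.toLinearEquiv F N.toSubmodule).finrank_eq.symm.trans
    Module.finrank_baseChange

end Dimension

theorem stmt4_general
    (k F : Type*) [Field k] [Field F] [Algebra k F] [FiniteDimensional k F] [IsGalois k F]
    (𝔤 : Type*) [LieRing 𝔤] [LieAlgebra k 𝔤]
    (W : Type*) [AddCommGroup W] [Module k W] [LieRingModule 𝔤 W] [LieModule k 𝔤 W]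
    (Γ A : Type*)
    (Wfam : Γ → LieSubmodule k 𝔤 W)
    (hWatom : ∀ γ, IsAtom (Wfam γ)) (hWindep : iSupIndep Wfam) (hWsup : (⨆ γ, Wfam γ) = ⊤)
    (Vfam : A → LieSubmodule F (F ⊗[k] 𝔤) (F ⊗[k] W))
    (hVatom : ∀ α, IsAtom (Vfam α)) (hVindep : iSupIndep Vfam) (hVsup : (⨆ α, Vfam α) = ⊤)
    (γ₀ : Γ) (α₀ : A) (hα₀ : Vfam α₀ ≤ (Wfam γ₀).baseChange F)
    [FiniteDimensional k
      ↥(⨆ γ ∈ {γ | Nonempty (↥(Wfam γ) ≃ₗ⁅k,𝔤⁆ ↥(Wfam γ₀))}, Wfam γ)] :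
    Nat.card {γ : Γ // Nonempty (↥(Wfam γ) ≃ₗ⁅k,𝔤⁆ ↥(Wfam γ₀))}
        * Module.finrank k ↥(Wfam γ₀)
      = ∑ᶠ α ∈ {α' : A | ∃ σ τ : F ≃ₐ[k] F, GalConjIso k F 𝔤 τ σ (Vfam α₀) (Vfam α')},
          Module.finrank F ↥(Vfam α) := by
  set T := {γ | Nonempty (Wfam γ ≃ₗ⁅k,𝔤⁆ Wfam γ₀)}
  set S := {α | ∃ σ τ : F ≃ₐ[k] F, GalConjIso k F 𝔤 τ σ (Vfam α₀) (Vfam α)}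
  have hST : ⨆ α ∈ S, Vfam α = (⨆ γ ∈ T, Wfam γ).baseChange F :=
    iSup_galConjIso_eq_baseChange_iSup_equiv hWatom hWindep hWsup hVatom hVsup hα₀
  have hfinS : FiniteDimensional F ↥(⨆ α ∈ S, Vfam α) := hST ▸
    Module.Finite.equiv (Submodule.toBaseChange.toLinearEquiv F (⨆ γ ∈ T, Wfam γ).toSubmodule)
  have : Finite T := finite_of_finiteDimensional_biSup T hWindep fun γ ↦ (hWatom γ).1
  have : Finite S := finite_of_finiteDimensional_biSup S hVindep fun α ↦ (hVatom α).1
  calc Nat.card T * Module.finrank k (Wfam γ₀)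
      = Module.finrank k ↥(⨆ γ ∈ T, Wfam γ) :=
        (finrank_biSup_eq_card_mul T hWindep fun _ ⟨e⟩ ↦ e.toLinearEquiv.finrank_eq).symm
    _ = Module.finrank F ↥(⨆ α ∈ S, Vfam α) := by rw [hST, finrank_lieBaseChange]
    _ = ∑ᶠ α ∈ S, Module.finrank F (Vfam α) := finrank_biSup_eq_finsum S hVindep

/-- With decompositions `W = ⊕_γ W_γ` (irreducible over `k`) and
`W ⊗_k F = ⊕_α V_α` (irreducible over `F`), `V_{α₀} ⊆ W_{γ₀} ⊗_k F`: the multiplicity `m`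
of `W_{γ₀}` in `W` satisfies `m · dim_k W_{γ₀} = Σ_{α ∈ A'} dim_F V_α`, where `A'` is the
set of `α` whose `V_α` is Galois-conjugate-isomorphic to `V_{α₀}`. -/
theorem stmt4
    (k F : Type*) [Field k] [Field F] [Algebra k F] [FiniteDimensional k F] [IsGalois k F]
    (𝔤 : Type*) [LieRing 𝔤] [LieAlgebra k 𝔤] [Module.Finite k 𝔤]
    (W : Type*)
    [AddCommGroup W] [Module k W] [LieRingModule 𝔤 W] [LieModule k 𝔤 W] [Module.Finite k W]
    (Γ A : Type)
    (Wfam : Γ → LieSubmodule k 𝔤 W)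
    (hWatom : ∀ γ, IsAtom (Wfam γ)) (hWindep : iSupIndep Wfam) (hWsup : (⨆ γ, Wfam γ) = ⊤)
    (Vfam : A → LieSubmodule F (F ⊗[k] 𝔤) (F ⊗[k] W))
    (hVatom : ∀ α, IsAtom (Vfam α)) (hVindep : iSupIndep Vfam) (hVsup : (⨆ α, Vfam α) = ⊤)
    (γ₀ : Γ) (α₀ : A) (hα₀ : Vfam α₀ ≤ (Wfam γ₀).baseChange F) :
    Nat.card {γ : Γ // Nonempty (↥(Wfam γ) ≃ₗ⁅k, 𝔤⁆ ↥(Wfam γ₀))}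
        * Module.finrank k ↥(Wfam γ₀)
      = ∑ᶠ α ∈ {α' : A | ∃ σ τ : F ≃ₐ[k] F, GalConjIso k F 𝔤 τ σ (Vfam α₀) (Vfam α')},
          Module.finrank F ↥(Vfam α) := by
  exact stmt4_general k F 𝔤 W Γ A Wfam hWatom hWindep hWsup Vfam hVatom hVindep hVsup γ₀ α₀ hα₀
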